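/- Let γ > 1, K > 0, μ ≥ 0, and let C, c0, c1, c2 be real constants. Set a(t) = c0 + c1·t, b(t) = 3c0·c1·t + (3/2)·c1²·t² + c2, Q(t,x,y,z) = C²(x² + y² + z² − xy − yz − xz) − c1·(x + y + z) + b(t), and on the region where Q > 0 define ρ = ((γ−1)/(K·γ)·Q)^{1/(γ−1)}, u1 = a(t) + C(y − z), u2 = a(t) + C(−x + z), u3 = a(t) + C(x − y), P = K·ρ^γ. Then at every point (t,x,y,z) with Q(t,x,y,z) > 0, the compressible Navier–Stokes momentum equations hold: ρ·(∂uᵢ/∂t + u1·∂uᵢ/∂x + u2·∂uᵢ/∂y + u3·∂uᵢ/∂z) + ∂P/∂xᵢ = μ·(∂²uᵢ/∂x² + ∂²uᵢ/∂y² + ∂²uᵢ/∂z²) for i = 1, 2, 3. -/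

import Mathlib

/-!
The velocity is affine in space, so its Laplacian vanishes and the momentum equations reduce to
`ρ (∂ₜuᵢ + u·∇uᵢ) + ∂ᵢP = 0`. Since `P = K ρ ^ γ` with `ρ ^ (γ - 1) = (γ - 1) / (K γ) · Q`, the chain
rule gives `∂ᵢP = ρ ∂ᵢQ` (`deriv_pressure`), and the polynomial identity
`∂ₜuᵢ + u·∇uᵢ = -∂ᵢQ` finishes the proof.
-/

/-- The barotropic relation `P' = ρ q'` along a line, where `q` is the restriction of `Q` to it.
The formula for `p` is only assumed where `q` is positive, which by continuity of `q` includes a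
neighbourhood of `x`. -/
lemma deriv_pressure {γ K : ℝ} (hγ : 1 < γ) (hK : 0 < K) {q r p : ℝ → ℝ} {q' x : ℝ}
    (hq : HasDerivAt q q' x) (hx : 0 < q x)
    (hr : ∀ s, 0 < q s → r s = ((γ - 1) / (K * γ) * q s) ^ (1 / (γ - 1)))
    (hp : ∀ s, 0 < q s → p s = K * r s ^ γ) :
    deriv p x = r x * q' := by
  have hγ1 : 0 < γ - 1 := by linarith
  have hγ0 : 0 < γ := by linarith
  have hk : 0 < (γ - 1) / (K * γ) := by positivity
  have hev : p =ᶠ[nhds x] fun s => K * ((γ - 1) / (K * γ) * q s) ^ (γ / (γ - 1)) := by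
    filter_upwards [hq.continuousAt.eventually (lt_mem_nhds hx)] with s hs
    rw [hp s hs, hr s hs, ← Real.rpow_mul (by positivity)]
    congr 2
    ring
  have hd := ((hq.const_mul ((γ - 1) / (K * γ))).rpow_const (p := γ / (γ - 1))
    (Or.inl (mul_pos hk hx).ne')).const_mul K
  rw [hev.deriv_eq, hd.deriv, hr x hx]
  have he : γ / (γ - 1) - 1 = 1 / (γ - 1) := by field_simp; ring
  rw [he]
  field_simp

lemma deriv_of_affine {f : ℝ → ℝ} (m n : ℝ) (hf : ∀ s, f s = m * s + n) (x : ℝ) :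
    deriv f x = m := by
  rw [funext hf]
  simp

lemma hasDerivAt_of_quadratic {f : ℝ → ℝ} (l m n : ℝ) (hf : ∀ s, f s = l * s ^ 2 + m * s + n)
    (x : ℝ) : HasDerivAt f (2 * l * x + m) x := by
  rw [funext hf]
  refine ((((hasDerivAt_pow 2 x).const_mul l).add ((hasDerivAt_id x).const_mul m)).add_const
    n).congr_deriv ?_
  simp
  ring

/-- Yuen's rotational solution for `γ > 1` satisfies the compressible
Navier–Stokes momentum equations `ρ(∂_t uᵢ + u·∇uᵢ) + ∂_{xᵢ} P = μ Δuᵢ`,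
with `P = K ρ^γ`, at every point where `Q > 0`. -/
theorem stmt_9 (γ K μ C c0 c1 c2 : ℝ) (hγ : 1 < γ) (hK : 0 < K) (hμ : 0 ≤ μ)
    (a b : ℝ → ℝ) (ha : ∀ t, a t = c0 + c1 * t)
    (hb : ∀ t, b t = 3 * c0 * c1 * t + (3 / 2) * c1 ^ 2 * t ^ 2 + c2)
    (Q : ℝ → ℝ → ℝ → ℝ → ℝ)
    (hQ : ∀ t x y z, Q t x y z
      = C ^ 2 * (x ^ 2 + y ^ 2 + z ^ 2 - x * y - y * z - x * z)
        - c1 * (x + y + z) + b t)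
    (ρ u1 u2 u3 P : ℝ → ℝ → ℝ → ℝ → ℝ)
    (hρ : ∀ t x y z, 0 < Q t x y z →
      ρ t x y z = ((γ - 1) / (K * γ) * Q t x y z) ^ (1 / (γ - 1)))
    (hu1 : ∀ t x y z, u1 t x y z = a t + C * (y - z))
    (hu2 : ∀ t x y z, u2 t x y z = a t + C * (-x + z))
    (hu3 : ∀ t x y z, u3 t x y z = a t + C * (x - y))
    (hP : ∀ t x y z, 0 < Q t x y z → P t x y z = K * ρ t x y z ^ γ) :
    ∀ t x y z : ℝ, 0 < Q t x y z →
      (ρ t x y z * (deriv (fun s => u1 s x y z) t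
          + u1 t x y z * deriv (fun s => u1 t s y z) x
          + u2 t x y z * deriv (fun s => u1 t x s z) y
          + u3 t x y z * deriv (fun s => u1 t x y s) z)
        + deriv (fun s => P t s y z) x
        = μ * (deriv (fun s => deriv (fun r => u1 t r y z) s) x
            + deriv (fun s => deriv (fun r => u1 t x r z) s) y
            + deriv (fun s => deriv (fun r => u1 t x y r) s) z))
      ∧ (ρ t x y z * (deriv (fun s => u2 s x y z) t
          + u1 t x y z * deriv (fun s => u2 t s y z) x
          + u2 t x y z * deriv (fun s => u2 t x s z) y
          + u3 t x y z * deriv (fun s => u2 t x y s) z)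
        + deriv (fun s => P t x s z) y
        = μ * (deriv (fun s => deriv (fun r => u2 t r y z) s) x
            + deriv (fun s => deriv (fun r => u2 t x r z) s) y
            + deriv (fun s => deriv (fun r => u2 t x y r) s) z))
      ∧ (ρ t x y z * (deriv (fun s => u3 s x y z) t
          + u1 t x y z * deriv (fun s => u3 t s y z) x
          + u2 t x y z * deriv (fun s => u3 t x s z) y
          + u3 t x y z * deriv (fun s => u3 t x y s) z)
        + deriv (fun s => P t x y s) z
        = μ * (deriv (fun s => deriv (fun r => u3 t r y z) s) x
            + deriv (fun s => deriv (fun r => u3 t x r z) s) y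
            + deriv (fun s => deriv (fun r => u3 t x y r) s) z)) := by
  intro t x y z hpos
  have t1 : deriv (fun s => u1 s x y z) t = c1 :=
    deriv_of_affine _ (u1 0 x y z) (fun s => by simp only [hu1, ha]; ring) t
  have x1 : ∀ s, deriv (fun r => u1 t r y z) s = 0 :=
    deriv_of_affine _ (u1 t 0 y z) (fun s => by simp only [hu1]; ring)
  have y1 : ∀ s, deriv (fun r => u1 t x r z) s = C :=
    deriv_of_affine _ (u1 t x 0 z) (fun s => by simp only [hu1]; ring)
  have z1 : ∀ s, deriv (fun r => u1 t x y r) s = -C :=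
    deriv_of_affine _ (u1 t x y 0) (fun s => by simp only [hu1]; ring)
  have t2 : deriv (fun s => u2 s x y z) t = c1 :=
    deriv_of_affine _ (u2 0 x y z) (fun s => by simp only [hu2, ha]; ring) t
  have x2 : ∀ s, deriv (fun r => u2 t r y z) s = -C :=
    deriv_of_affine _ (u2 t 0 y z) (fun s => by simp only [hu2]; ring)
  have y2 : ∀ s, deriv (fun r => u2 t x r z) s = 0 :=
    deriv_of_affine _ (u2 t x 0 z) (fun s => by simp only [hu2]; ring)
  have z2 : ∀ s, deriv (fun r => u2 t x y r) s = C :=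
    deriv_of_affine _ (u2 t x y 0) (fun s => by simp only [hu2]; ring)
  have t3 : deriv (fun s => u3 s x y z) t = c1 :=
    deriv_of_affine _ (u3 0 x y z) (fun s => by simp only [hu3, ha]; ring) t
  have x3 : ∀ s, deriv (fun r => u3 t r y z) s = C :=
    deriv_of_affine _ (u3 t 0 y z) (fun s => by simp only [hu3]; ring)
  have y3 : ∀ s, deriv (fun r => u3 t x r z) s = -C :=
    deriv_of_affine _ (u3 t x 0 z) (fun s => by simp only [hu3]; ring)
  have z3 : ∀ s, deriv (fun r => u3 t x y r) s = 0 :=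
    deriv_of_affine _ (u3 t x y 0) (fun s => by simp only [hu3]; ring)
  have px := deriv_pressure hγ hK
    (hasDerivAt_of_quadratic (C ^ 2) (-C ^ 2 * (y + z) - c1) (Q t 0 y z)
      (f := fun s => Q t s y z) (fun s => by simp only [hQ]; ring) x)
    hpos (fun s => hρ t s y z) (fun s => hP t s y z)
  have py := deriv_pressure hγ hK
    (hasDerivAt_of_quadratic (C ^ 2) (-C ^ 2 * (x + z) - c1) (Q t x 0 z)
      (f := fun s => Q t x s z) (fun s => by simp only [hQ]; ring) y)
    hpos (fun s => hρ t x s z) (fun s => hP t x s z)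
  have pz := deriv_pressure hγ hK
    (hasDerivAt_of_quadratic (C ^ 2) (-C ^ 2 * (x + y) - c1) (Q t x y 0)
      (f := fun s => Q t x y s) (fun s => by simp only [hQ]; ring) z)
    hpos (fun s => hρ t x y s) (fun s => hP t x y s)
  simp only [t1, t2, t3, x1, x2, x3, y1, y2, y3, z1, z2, z3, px, py, pz, deriv_const]
  simp only [hu1, hu2, hu3]
  refine ⟨?_, ?_, ?_⟩ <;> ring
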